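/- The gap label set G_b is the orbit of the two points (b+1)/(2(b+2)) and (b+3)/(2(b+2)) under the iterated function system {Q_0, Q_1, Q_2}; explicitly, G_b = ⋃_{n≥0} { Q_{w_1} ∘ ⋯ ∘ Q_{w_n}(y) : (w_1,…,w_n) ∈ {0,1,2}^n, y ∈ {(b+1)/(2(b+2)), (b+3)/(2(b+2))} }, and equivalently G_b is the smallest subset of ℝ that contains (b+1)/(2(b+2)) and (b+3)/(2(b+2)) and is closed under each of the maps Q_0, Q_1, Q_2. -/

import Mathlib

open Set

/-- The gap label set
`G_b = {(b+1+2w_k)/(2(b+2)^k) + ((b+1)/2)·Σ_{j=1}^{k−1} w_j/(b+2)^j}` over all `k ≥ 1`,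
`w_1,…,w_{k−1} ∈ {0,1,2}`, `w_k ∈ {0,1}`. -/
noncomputable def Gb (b : ℕ) : Set ℝ :=
  {y : ℝ | ∃ (k : ℕ) (w : ℕ → ℕ), 1 ≤ k ∧
    (∀ j : ℕ, 1 ≤ j → j ≤ k - 1 → w j ∈ ({0, 1, 2} : Set ℕ)) ∧
    w k ∈ ({0, 1} : Set ℕ) ∧
    y = ((b : ℝ) + 1 + 2 * (w k : ℝ)) / (2 * ((b : ℝ) + 2) ^ k) +
      (((b : ℝ) + 1) / 2) * ∑ j ∈ Finset.Icc 1 (k - 1), (w j : ℝ) / ((b : ℝ) + 2) ^ j}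

/-- The maps `Q_0, Q_1, Q_2` of the gap-label iterated function system. -/
noncomputable def Qmap (b : ℕ) : Fin 3 → ℝ → ℝ
  | 0 => fun y => y / ((b : ℝ) + 2)
  | 1 => fun y => 1 / 2 + (1 - 2 * y) / (2 * ((b : ℝ) + 2))
  | 2 => fun y => 1 + (y - 1) / ((b : ℝ) + 2)

/-- The two starting gap labels `(b+1)/(2(b+2))` and `(b+3)/(2(b+2))`. -/
noncomputable def gapBase (b : ℕ) : Set ℝ :=
  {((b : ℝ) + 1) / (2 * ((b : ℝ) + 2)), ((b : ℝ) + 3) / (2 * ((b : ℝ) + 2))}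

/-!
The reflection `y ↦ 1 - y` preserves the two seeds. Up to this reflection the maps `Q_i` are the
orientation-preserving maps `P_i y = (y + i (B - 1) / 2) / B` with `B = b + 2`: `Q_0 = P_0`,
`Q_2 = P_2` and `Q_1 y = P_1 (1 - y)`. Since the reflection carries `P_i` to `P_(2 - i)`, the orbits
of the seeds under the `Q_i` and under the `P_i` coincide, and composing the `P_i` along a word
writes out the base-`B` expansion in the definition of `G_b`.
-/

section Orbit

variable {α ι : Type*} {f : ι → α → α} {A S : Set α}

/-- The orbit of the set `A` under the iterated function system `f`. The list `[i₁, …, iₙ]` encodes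
the composition `f i₁ ∘ ⋯ ∘ f iₙ`, so its last entry is applied first. -/
def ifsOrbit (f : ι → α → α) (A : Set α) : Set α :=
  {x | ∃ (l : List ι) (a : α), a ∈ A ∧ x = l.foldr f a}

lemma subset_ifsOrbit : A ⊆ ifsOrbit f A :=
  fun a ha => ⟨[], a, ha, rfl⟩

lemma apply_mem_ifsOrbit {x : α} (hx : x ∈ ifsOrbit f A) (i : ι) : f i x ∈ ifsOrbit f A := by
  obtain ⟨l, a, ha, rfl⟩ := hx
  exact ⟨i :: l, a, ha, rfl⟩

lemma ifsOrbit_subset (hA : A ⊆ S) (hf : ∀ x ∈ S, ∀ i, f i x ∈ S) : ifsOrbit f A ⊆ S := by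
  rintro _ ⟨l, a, ha, rfl⟩
  induction l with
  | nil => exact hA ha
  | cons i l ih => exact hf _ ih i

lemma mem_ifsOrbit_iff_exists_seq [Nonempty ι] {x : α} :
    x ∈ ifsOrbit f A ↔
      ∃ (m : ℕ) (w : ℕ → ι), ∃ a ∈ A, x = ((List.range m).map w).foldr f a := by
  constructor
  · rintro ⟨l, a, ha, rfl⟩
    obtain ⟨d⟩ := ‹Nonempty ι›
    have hl : (List.range l.length).map (l.getD · d) = l :=
      List.ext_getElem (by simp) fun j _ hj => by simp [hj]
    exact ⟨l.length, (l.getD · d), a, ha, by rw [hl]⟩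
  · rintro ⟨m, w, a, ha, rfl⟩
    exact ⟨_, a, ha, rfl⟩

variable {σ : α → α} {τ : ι → ι}

lemma mapsTo_ifsOrbit_of_semiconj (hA : MapsTo σ A A)
    (hf : ∀ i, Function.Semiconj σ (f i) (f (τ i))) :
    MapsTo σ (ifsOrbit f A) (ifsOrbit f A) := by
  refine ifsOrbit_subset (S := σ ⁻¹' ifsOrbit f A) (fun a ha => subset_ifsOrbit (hA ha)) ?_
  intro x hx i
  rw [mem_preimage, hf i x]
  exact apply_mem_ifsOrbit hx (τ i)

lemma ifsOrbit_eq_of_eq_or_eq_comp {g : ι → α → α} (hσ : Function.Involutive σ)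
    (hA : MapsTo σ A A) (hf : ∀ i, Function.Semiconj σ (f i) (f (τ i)))
    (hg : ∀ i, g i = f i ∨ g i = f i ∘ σ) :
    ifsOrbit g A = ifsOrbit f A := by
  apply Subset.antisymm
  · refine ifsOrbit_subset subset_ifsOrbit fun x hx i => ?_
    rcases hg i with h | h <;> rw [h]
    · exact apply_mem_ifsOrbit hx i
    · exact apply_mem_ifsOrbit (mapsTo_ifsOrbit_of_semiconj hA hf hx) i
  · have f_mem {x : α} (hx : x ∈ ifsOrbit g A) (hσx : σ x ∈ ifsOrbit g A) (i : ι) :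
        f i x ∈ ifsOrbit g A := by
      rcases hg i with h | h
      · exact h ▸ apply_mem_ifsOrbit hx i
      · have hgf : g i (σ x) = f i x := by rw [h, Function.comp_apply, hσ x]
        exact hgf ▸ apply_mem_ifsOrbit hσx i
    -- `f i x` may be reached only as `g i (σ x)`, so `x` and `σ x` are carried together.
    suffices h : ifsOrbit f A ⊆ {x | x ∈ ifsOrbit g A ∧ σ x ∈ ifsOrbit g A} from
      fun x hx => (h hx).1
    refine ifsOrbit_subset (fun a ha => ⟨subset_ifsOrbit ha, subset_ifsOrbit (hA ha)⟩) ?_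
    rintro x ⟨hx, hσx⟩ i
    refine ⟨f_mem hx hσx i, ?_⟩
    rw [hf i x]
    exact f_mem hσx (by rwa [hσ x]) (τ i)

end Orbit

section DigitMap

variable {K ι : Type*} [Field K]

/-- The maps `y ↦ (y + t i) / B`, which prepend the digit `t i` to a base-`B` expansion. -/
def digitMap (B : K) (t : ι → K) (i : ι) (y : K) : K :=
  (y + t i) / B

lemma foldr_digitMap_map_range (B : K) (t : ι → K) (w : ℕ → ι) (m : ℕ) (y : K) :
    ((List.range m).map w).foldr (digitMap B t) y =
      y / B ^ m + ∑ j ∈ Finset.range m, t (w j) / B ^ (j + 1) := by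
  induction m generalizing y with
  | zero => simp
  | succ m ih =>
    rw [List.range_succ, List.map_append, List.foldr_append, ih, Finset.sum_range_succ]
    simp only [List.map_cons, List.map_nil, List.foldr_cons, List.foldr_nil, digitMap]
    rw [div_div, ← pow_succ', add_div]
    ring

lemma semiconj_one_sub_digitMap {B : K} (hB : B ≠ 0) {t : ι → K} {i j : ι}
    (hij : t i + t j = B - 1) :
    Function.Semiconj (1 - ·) (digitMap B t i) (digitMap B t j) := by
  intro y
  simp only [digitMap]
  rw [one_sub_div hB]
  congr 1
  linear_combination -hij

end DigitMap

section GapLabels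

variable {K : Type*} [Field K]

/-- The gap label set over a field, in terms of `B = b + 2`. Compared with `Gb`, the expansion has
`m = k - 1` digits, indexed from `0`, and the final digit `w_k` is called `e`. -/
def gapLabels (B : K) : Set K :=
  {y | ∃ (m : ℕ) (w : ℕ → Fin 3) (e : Fin 2),
    y = (B - 1 + 2 * (e : ℕ)) / (2 * B ^ (m + 1)) +
      (B - 1) / 2 * ∑ j ∈ Finset.range m, ((w j : ℕ) : K) / B ^ (j + 1)}

/-- The maps `Q_0, Q_1, Q_2` over a field, in terms of `B = b + 2`. -/
def gapMap (B : K) : Fin 3 → K → K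
  | 0 => fun y => y / B
  | 1 => fun y => 1 / 2 + (1 - 2 * y) / (2 * B)
  | 2 => fun y => 1 + (y - 1) / B

/-- The two starting gap labels over a field, in terms of `B = b + 2`. -/
def gapSeeds (B : K) : Set K :=
  {(B - 1) / (2 * B), (B + 1) / (2 * B)}

/-- The digits `0`, `(B - 1) / 2`, `B - 1` of the orientation-preserving maps `P_i`. -/
def gapDigit (B : K) (i : Fin 3) : K :=
  (i : ℕ) * ((B - 1) / 2)

lemma mem_gapSeeds_iff {B y : K} :
    y ∈ gapSeeds B ↔ ∃ e : Fin 2, y = (B - 1 + 2 * (e : ℕ)) / (2 * B) := by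
  have h : B - 1 + 2 = B + 1 := by ring
  simp [gapSeeds, Fin.exists_fin_two, h]

lemma gapLabels_eq_ifsOrbit_digitMap (B : K) :
    gapLabels B = ifsOrbit (digitMap B (gapDigit B)) (gapSeeds B) := by
  have label_eq (m : ℕ) (w : ℕ → Fin 3) (e : Fin 2) :
      (B - 1 + 2 * (e : ℕ)) / (2 * B ^ (m + 1)) +
          (B - 1) / 2 * ∑ j ∈ Finset.range m, ((w j : ℕ) : K) / B ^ (j + 1) =
        ((List.range m).map w).foldr (digitMap B (gapDigit B))
          ((B - 1 + 2 * (e : ℕ)) / (2 * B)) := by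
    rw [foldr_digitMap_map_range, div_div, mul_assoc, ← pow_succ', Finset.mul_sum]
    simp only [gapDigit, mul_div_assoc', mul_comm]
  ext y
  simp only [gapLabels, mem_ofPred_eq, mem_ifsOrbit_iff_exists_seq, mem_gapSeeds_iff, label_eq]
  constructor
  · rintro ⟨m, w, e, rfl⟩
    exact ⟨m, w, _, ⟨e, rfl⟩, rfl⟩
  · rintro ⟨m, w, _, ⟨e, rfl⟩, rfl⟩
    exact ⟨m, w, e, rfl⟩

lemma gapMap_zero (B : K) : gapMap B 0 = digitMap B (gapDigit B) 0 := by
  ext y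
  simp [gapMap, digitMap, gapDigit]

variable [NeZero (2 : K)] {B : K}

lemma mapsTo_one_sub_gapSeeds (hB : B ≠ 0) : MapsTo (1 - ·) (gapSeeds B) (gapSeeds B) := by
  have h₂ : (2 : K) ≠ 0 := two_ne_zero
  have hreflect : 1 - (B - 1) / (2 * B) = (B + 1) / (2 * B) := by
    field_simp
    ring
  rintro y (rfl | rfl)
  · exact .inr hreflect
  · exact .inl (sub_eq_of_eq_add' (sub_eq_iff_eq_add.mp hreflect))

lemma gapDigit_add_gapDigit_rev (B : K) (i : Fin 3) :
    gapDigit B i + gapDigit B i.rev = B - 1 := by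
  have h₂ : (2 : K) ≠ 0 := two_ne_zero
  have hsum : ((i : ℕ) : K) + (i.rev : ℕ) = 2 := by
    rw [← Nat.cast_add, show (i : ℕ) + i.rev = 2 by grind, Nat.cast_ofNat]
  rw [gapDigit, gapDigit, ← add_mul, hsum, mul_div_cancel₀ _ h₂]

lemma gapMap_one (hB : B ≠ 0) : gapMap B 1 = digitMap B (gapDigit B) 1 ∘ (1 - ·) := by
  have h₂ : (2 : K) ≠ 0 := two_ne_zero
  ext y
  simp only [gapMap, digitMap, gapDigit, Function.comp_apply, Fin.val_one, Nat.cast_one]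
  field_simp
  ring

lemma gapMap_two (hB : B ≠ 0) : gapMap B 2 = digitMap B (gapDigit B) 2 := by
  have h₂ : (2 : K) ≠ 0 := two_ne_zero
  ext y
  simp only [gapMap, digitMap, gapDigit, Fin.val_two, Nat.cast_ofNat]
  field_simp
  ring

lemma ifsOrbit_gapMap_eq_ifsOrbit_digitMap (hB : B ≠ 0) :
    ifsOrbit (gapMap B) (gapSeeds B) = ifsOrbit (digitMap B (gapDigit B)) (gapSeeds B) := by
  refine ifsOrbit_eq_of_eq_or_eq_comp (σ := (1 - ·)) (τ := Fin.rev) (sub_sub_cancel 1)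
    (mapsTo_one_sub_gapSeeds hB)
    (fun i => semiconj_one_sub_digitMap hB (gapDigit_add_gapDigit_rev B i)) fun i => ?_
  fin_cases i
  · exact .inl (gapMap_zero B)
  · exact .inr (gapMap_one hB)
  · exact .inl (gapMap_two hB)

theorem gap_labels_are_IFS_orbit_general (hB : B ≠ 0) :
    gapLabels B = ifsOrbit (gapMap B) (gapSeeds B) ∧
    gapSeeds B ⊆ gapLabels B ∧
    (∀ y ∈ gapLabels B, ∀ i, gapMap B i y ∈ gapLabels B) ∧
    (∀ S : Set K, gapSeeds B ⊆ S → (∀ y ∈ S, ∀ i, gapMap B i y ∈ S) → gapLabels B ⊆ S) := by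
  have horbit : gapLabels B = ifsOrbit (gapMap B) (gapSeeds B) :=
    (gapLabels_eq_ifsOrbit_digitMap B).trans (ifsOrbit_gapMap_eq_ifsOrbit_digitMap hB).symm
  refine ⟨horbit, ?_⟩
  rw [horbit]
  exact ⟨subset_ifsOrbit, fun _ hy i => apply_mem_ifsOrbit hy i, fun _ => ifsOrbit_subset⟩

end GapLabels

lemma Gb_eq_gapLabels (b : ℕ) : Gb b = gapLabels ((b : ℝ) + 2) := by
  have hb : (b : ℝ) + 2 - 1 = b + 1 := by ring
  have sum_shift (w : ℕ → ℕ) (m : ℕ) :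
      ∑ j ∈ Finset.Icc 1 m, (w j : ℝ) / ((b : ℝ) + 2) ^ j =
        ∑ j ∈ Finset.range m, (w (j + 1) : ℝ) / ((b : ℝ) + 2) ^ (j + 1) := by
    rw [Finset.range_eq_Ico, Finset.sum_Ico_add' (fun j => (w j : ℝ) / ((b : ℝ) + 2) ^ j)]
    rfl
  ext y
  simp only [Gb, gapLabels, mem_ofPred_eq, mem_insert_iff, mem_singleton_iff, hb, sum_shift]
  constructor
  · rintro ⟨k, w, hk, hw, he, rfl⟩
    obtain ⟨m, rfl⟩ := Nat.exists_eq_add_of_le' hk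
    have he' : w (m + 1) < 2 := by omega
    refine ⟨m, fun j => Fin.ofNat 3 (w (j + 1)), ⟨w (m + 1), he'⟩, ?_⟩
    rw [Nat.add_sub_cancel]
    congr 2
    refine Finset.sum_congr rfl fun j hj => ?_
    have hwj := hw (j + 1) (by omega) (by grind)
    have hmod : w (j + 1) % 3 = w (j + 1) := Nat.mod_eq_of_lt (by omega)
    rw [Fin.val_ofNat, hmod]
  · rintro ⟨m, w, e, rfl⟩
    let v : ℕ → ℕ := fun j => if j = m + 1 then e else w (j - 1)
    have v_last : v (m + 1) = e := if_pos rfl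
    have v_digit (j : ℕ) (hj : j < m) : v (j + 1) = w j := if_neg (by omega)
    refine ⟨m + 1, v, by omega, fun j hj hjm => ?_, by omega, ?_⟩
    · have hvj := v_digit (j - 1) (by omega)
      rw [Nat.sub_add_cancel hj] at hvj
      omega
    · rw [Nat.add_sub_cancel, v_last]
      congr 2
      exact Finset.sum_congr rfl fun j hj => by rw [v_digit j (Finset.mem_range.mp hj)]

lemma Qmap_eq_gapMap (b : ℕ) : Qmap b = gapMap ((b : ℝ) + 2) := by
  ext i y
  fin_cases i <;> rfl

lemma gapBase_eq_gapSeeds (b : ℕ) : gapBase b = gapSeeds ((b : ℝ) + 2) := by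
  rw [gapBase, gapSeeds]
  ring_nf

/-- `G_b` is the orbit of `{(b+1)/(2(b+2)), (b+3)/(2(b+2))}` under the iterated
function system `{Q_0, Q_1, Q_2}`: explicitly it is the set of all values
`Q_{w_1} ∘ ⋯ ∘ Q_{w_n}(y)` with `y` in the base set, and equivalently it is the
smallest subset of `ℝ` containing the base set and closed under each `Q_i`. -/
theorem gap_labels_are_IFS_orbit (b : ℕ) (hb : 2 ≤ b) :
    (Gb b = {y : ℝ | ∃ (l : List (Fin 3)) (y₀ : ℝ), y₀ ∈ gapBase b ∧
        y = l.foldr (fun i acc => Qmap b i acc) y₀}) ∧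
    gapBase b ⊆ Gb b ∧
    (∀ y ∈ Gb b, ∀ i : Fin 3, Qmap b i y ∈ Gb b) ∧
    (∀ S : Set ℝ, gapBase b ⊆ S → (∀ y ∈ S, ∀ i : Fin 3, Qmap b i y ∈ S) →
      Gb b ⊆ S) := by
  rw [Gb_eq_gapLabels, gapBase_eq_gapSeeds, Qmap_eq_gapMap]
  exact gap_labels_are_IFS_orbit_general (by positivity)
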